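/- Let Ω be a countably infinite set, f : Ω → ℝ^d, and B ∈ ℝ^d. Define Λ_B = {ω ∈ Ω : f(ω) = B} and suppose Λ_B is finite and non-empty. Suppose there exists b ∈ ℝ^d such that Z := Σ_{ω∈Ω} e^{−⟨b, f(ω)⟩} < ∞ and, setting μ(ω) := (1/Z) e^{−⟨b, f(ω)⟩}, one has E_μ f = B. Then H(μ) ≥ H(ν) for every probability distribution ν on Ω with E_ν f = B, and |Λ_B| = e^{H(μ)} · μ(Λ_B). -/

import Mathlib

open scoped Classical

/-- Shannon entropy of a probability mass function on a countable type. -/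
noncomputable def shannonEntropy {Ω : Type*} (μ : Ω → ℝ) : ℝ :=
  -∑' ω, μ ω * Real.log (μ ω)

/-!
For `μ = exp (-U) / Z` the cross entropy of `ν` relative to `μ` is `E_ν U + log Z`. It therefore
takes the same value at `ν = μ`, where it is `H(μ)`, and at every other `ν` with the same mean
energy, while by Gibbs' inequality it bounds `H(ν)` from above. Moreover `-log (μ ω)` equals
`U ω + log Z`, so `μ` is constantly `exp (-H(μ))` on the set where `U` takes its mean value.
-/

theorem hasSum_of_tsum_eq {Ω M : Type*} [AddCommMonoid M] [TopologicalSpace M] {g : Ω → M} {a : M}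
    (h : ∑' ω, g ω = a) (ha : a ≠ 0) : HasSum g a :=
  have summable : Summable g := not_imp_comm.1 tsum_eq_zero_of_not_summable (h ▸ ha)
  h ▸ summable.hasSum

theorem hasSum_smul_pi {Ω ι : Type*} {p : Ω → ℝ} {f : Ω → ι → ℝ} {B : ι → ℝ}
    (hs : ∀ i, Summable fun ω => p ω * f ω i) (hB : ∀ i, ∑' ω, p ω * f ω i = B i) :
    HasSum (fun ω => p ω • f ω) B :=
  Pi.hasSum.2 fun i => (hs i).hasSum_iff.2 (hB i)

theorem sub_le_mul_log_sub_mul_log {x y : ℝ} (hx : 0 ≤ x) (hy : 0 < y) :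
    x - y ≤ x * Real.log x - x * Real.log y := by
  rcases hx.eq_or_lt with rfl | hx
  · simpa using hy.le
  · calc x - y = x * (1 - (x / y)⁻¹) := by field_simp
      _ ≤ x * Real.log (x / y) := by
        gcongr
        exact Real.one_sub_inv_le_log_of_pos (div_pos hx hy)
      _ = x * Real.log x - x * Real.log y := by
        rw [Real.log_div hx.ne' hy.ne', mul_sub]

theorem shannonEntropy_le_neg_of_hasSum_mul_log {Ω : Type*} {p q : Ω → ℝ} {c : ℝ}
    (hp : ∀ ω, 0 ≤ p ω) (hq : ∀ ω, 0 < q ω) (hp1 : HasSum p 1) (hq1 : HasSum q 1)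
    (hpq : HasSum (fun ω => p ω * Real.log (q ω)) c) : shannonEntropy p ≤ -c := by
  have lower : HasSum (fun ω => p ω * Real.log (q ω) + (p ω - q ω)) c := by
    simpa only [sub_self, add_zero] using hpq.add (hp1.sub hq1)
  have lower_le ω : p ω * Real.log (q ω) + (p ω - q ω) ≤ p ω * Real.log (p ω) := by
    linarith [sub_le_mul_log_sub_mul_log (hp ω) (hq ω)]
  have mul_log_nonpos ω : p ω * Real.log (p ω) ≤ 0 :=
    Real.mul_log_nonpos (hp ω) (le_hasSum hp1 ω fun ω' _ => hp ω')
  have summable_mul_log : Summable fun ω => p ω * Real.log (p ω) :=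
    .of_neg <| lower.summable.neg.of_nonneg_of_le (fun ω => neg_nonneg.2 (mul_log_nonpos ω))
      fun ω => neg_le_neg (lower_le ω)
  exact neg_le_neg (hasSum_le lower_le lower summable_mul_log.hasSum)

/-- The normalizing constant of the Gibbs distribution with energy `U` at inverse temperature `1`;
it has the junk value `0` when the Boltzmann weights `exp (-U ω)` are not summable. -/
noncomputable def partitionFunction {Ω : Type*} (U : Ω → ℝ) : ℝ :=
  ∑' ω, Real.exp (-U ω)

/-- The Gibbs distribution with energy `U` at inverse temperature `1`, as a mass function. For
`U = ⟨b, f ·⟩` it is the member of the exponential family of `f` with natural parameter `-b`. -/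
noncomputable def gibbsDistribution {Ω : Type*} (U : Ω → ℝ) (ω : Ω) : ℝ :=
  Real.exp (-U ω) / partitionFunction U

section Gibbs

variable {Ω : Type*} {U p : Ω → ℝ} {u : ℝ}

theorem finite_setOf_eq_of_summable_exp_neg (hU : Summable fun ω => Real.exp (-U ω)) (u : ℝ) :
    {ω | U ω = u}.Finite := by
  have eventually_lt := hU.tendsto_cofinite_zero.eventually_lt_const (Real.exp_pos (-u))
  refine (Filter.eventually_cofinite.1 eventually_lt).subset fun ω (hω : U ω = u) => ?_
  exact (hω ▸ lt_irrefl _ : ¬Real.exp (-U ω) < Real.exp (-u))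

variable [Nonempty Ω]

theorem partitionFunction_pos (hU : Summable fun ω => Real.exp (-U ω)) :
    0 < partitionFunction U :=
  hU.tsum_pos (fun _ => (Real.exp_pos _).le) (Classical.arbitrary Ω) (Real.exp_pos _)

theorem gibbsDistribution_pos (hU : Summable fun ω => Real.exp (-U ω)) (ω : Ω) :
    0 < gibbsDistribution U ω :=
  div_pos (Real.exp_pos _) (partitionFunction_pos hU)

theorem hasSum_gibbsDistribution (hU : Summable fun ω => Real.exp (-U ω)) :
    HasSum (gibbsDistribution U) 1 :=
  div_self (partitionFunction_pos hU).ne' ▸ hU.hasSum.div_const (partitionFunction U)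

theorem log_gibbsDistribution (hU : Summable fun ω => Real.exp (-U ω)) (ω : Ω) :
    Real.log (gibbsDistribution U ω) = -(U ω + Real.log (partitionFunction U)) := by
  rw [gibbsDistribution, Real.log_div (Real.exp_ne_zero _) (partitionFunction_pos hU).ne',
    Real.log_exp, neg_add']

theorem hasSum_mul_log_gibbsDistribution (hU : Summable fun ω => Real.exp (-U ω))
    (hp1 : HasSum p 1) (hpU : HasSum (fun ω => p ω * U ω) u) :
    HasSum (fun ω => p ω * Real.log (gibbsDistribution U ω))
      (-(u + Real.log (partitionFunction U))) := by
  simpa only [log_gibbsDistribution hU, mul_neg, mul_add, one_mul] using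
    (hpU.add (hp1.mul_right (Real.log (partitionFunction U)))).neg

theorem shannonEntropy_gibbsDistribution (hU : Summable fun ω => Real.exp (-U ω))
    (hu : HasSum (fun ω => gibbsDistribution U ω * U ω) u) :
    shannonEntropy (gibbsDistribution U) = u + Real.log (partitionFunction U) := by
  rw [shannonEntropy,
    (hasSum_mul_log_gibbsDistribution hU (hasSum_gibbsDistribution hU) hu).tsum_eq, neg_neg]

theorem shannonEntropy_le_shannonEntropy_gibbsDistribution
    (hU : Summable fun ω => Real.exp (-U ω))
    (hu : HasSum (fun ω => gibbsDistribution U ω * U ω) u) (hp : ∀ ω, 0 ≤ p ω)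
    (hp1 : HasSum p 1) (hpU : HasSum (fun ω => p ω * U ω) u) :
    shannonEntropy p ≤ shannonEntropy (gibbsDistribution U) := by
  rw [shannonEntropy_gibbsDistribution hU hu, ← neg_neg (u + _)]
  exact shannonEntropy_le_neg_of_hasSum_mul_log hp (gibbsDistribution_pos hU) hp1
    (hasSum_gibbsDistribution hU) (hasSum_mul_log_gibbsDistribution hU hp1 hpU)

theorem exp_shannonEntropy_mul_gibbsDistribution (hU : Summable fun ω => Real.exp (-U ω))
    (hu : HasSum (fun ω => gibbsDistribution U ω * U ω) u) {ω : Ω} (hω : U ω = u) :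
    Real.exp (shannonEntropy (gibbsDistribution U)) * gibbsDistribution U ω = 1 := by
  rw [← Real.exp_log (gibbsDistribution_pos hU ω), log_gibbsDistribution hU, hω,
    shannonEntropy_gibbsDistribution hU hu, ← Real.exp_add, add_neg_cancel, Real.exp_zero]

theorem natCard_eq_exp_shannonEntropy_mul_tsum (hU : Summable fun ω => Real.exp (-U ω))
    (hu : HasSum (fun ω => gibbsDistribution U ω * U ω) u) {s : Set Ω} (hs : ∀ ω ∈ s, U ω = u) :
    (Nat.card s : ℝ) =
      Real.exp (shannonEntropy (gibbsDistribution U)) * ∑' ω : s, gibbsDistribution U ω := by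
  rw [← tsum_mul_left, tsum_congr fun ω : s =>
    exp_shannonEntropy_mul_gibbsDistribution hU hu (hs ω ω.2), tsum_const, nsmul_one]

end Gibbs

theorem stmt_3_general {Ω E : Type*} [Nonempty Ω] [AddCommMonoid E] [Module ℝ E]
    [TopologicalSpace E] (f : Ω → E) (B : E) (b : E →L[ℝ] ℝ)
    (hsum : Summable fun ω => Real.exp (-b (f ω)))
    (hmean : HasSum (fun ω => gibbsDistribution (b ∘ f) ω • f ω) B) :
    {ω | f ω = B}.Finite ∧
    (∀ ν : Ω → ℝ, (∀ ω, 0 ≤ ν ω) → HasSum ν 1 → HasSum (fun ω => ν ω • f ω) B →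
      shannonEntropy ν ≤ shannonEntropy (gibbsDistribution (b ∘ f))) ∧
    (Nat.card {ω // f ω = B} : ℝ) =
      Real.exp (shannonEntropy (gibbsDistribution (b ∘ f))) *
        ∑' ω : {ω // f ω = B}, gibbsDistribution (b ∘ f) ω := by
  have mean_energy {p : Ω → ℝ} (hp : HasSum (fun ω => p ω • f ω) B) :
      HasSum (fun ω => p ω * (b ∘ f) ω) (b B) := by
    simpa only [map_smul, smul_eq_mul, Function.comp_apply] using hp.mapL b
  have level_energy : ∀ ω ∈ {ω | f ω = B}, (b ∘ f) ω = b B := fun _ hω => congrArg b hω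
  exact ⟨(finite_setOf_eq_of_summable_exp_neg hsum (b B)).subset level_energy,
    fun ν hν hν1 hνB => shannonEntropy_le_shannonEntropy_gibbsDistribution hsum
      (mean_energy hmean) hν hν1 (mean_energy hνB),
    natCard_eq_exp_shannonEntropy_mul_tsum hsum (mean_energy hmean) level_energy⟩

theorem stmt_3 {Ω : Type*} [Countable Ω] [Infinite Ω] {d : ℕ}
    (f : Ω → Fin d → ℝ) (B : Fin d → ℝ)
    (hfin : {ω | f ω = B}.Finite) (hne : ∃ ω, f ω = B)
    (b : Fin d → ℝ)
    (hsum : Summable (fun ω => Real.exp (-∑ i, b i * f ω i)))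
    (Z : ℝ) (hZ : Z = ∑' ω, Real.exp (-∑ i, b i * f ω i))
    (μ : Ω → ℝ) (hμ : ∀ ω, μ ω = Real.exp (-∑ i, b i * f ω i) / Z)
    (hmom : ∀ i, Summable (fun ω => μ ω * f ω i))
    (hμB : ∀ i, ∑' ω, μ ω * f ω i = B i) :
    (∀ ν : Ω → ℝ, (∀ ω, 0 ≤ ν ω) → (∑' ω, ν ω) = 1 →
      (∀ i, Summable (fun ω => ν ω * f ω i)) →
      (∀ i, ∑' ω, ν ω * f ω i = B i) → shannonEntropy ν ≤ shannonEntropy μ) ∧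
    (Nat.card {ω // f ω = B} : ℝ) =
      Real.exp (shannonEntropy μ) * ∑' ω : {ω // f ω = B}, μ ω := by
  obtain rfl : μ = gibbsDistribution fun ω => b ⬝ᵥ f ω := by
    subst hZ
    exact funext hμ
  obtain ⟨-, hmax, hcard⟩ := stmt_3_general f B (dotProductBilin ℝ ℝ b).toContinuousLinearMap
    hsum (hasSum_smul_pi hmom hμB)
  exact ⟨fun ν hν hν1 hνs hνB =>
    hmax ν hν (hasSum_of_tsum_eq hν1 one_ne_zero) (hasSum_smul_pi hνs hνB), hcard⟩
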